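/- Let n ≥ 3 and 1 ≤ k ≤ n−2. Deleting the first three letters gives a bijection from the set of reduced decompositions of w_0^B ∈ B_n whose first three letters are (k, k+1, k) onto R(w_k), and likewise a bijection from the set of reduced decompositions of w_0^B whose first three letters are (k+1, k, k+1) onto R(w_k). Consequently, the number of reduced decompositions of w_0^B beginning with (k, k+1, k) or (k+1, k, k+1) equals 2·|R(w_k)|. -/

import Mathlib

/-- The generator `sᵢ` of the hyperoctahedral group `Bₙ`, realized as a permutation of `ℤ`:
`s₀` swaps `1` and `-1`; for `i ≥ 1`, `sᵢ` swaps `i` with `i+1` and `-i` with `-(i+1)`,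
fixing all other integers. -/
def sB (i : ℕ) : Equiv.Perm ℤ :=
  if i = 0 then Equiv.swap 1 (-1)
  else Equiv.swap (i : ℤ) ((i : ℤ) + 1) * Equiv.swap (-(i : ℤ)) (-((i : ℤ) + 1))

/-- The product `s_{i₁} ⋯ s_{i_ℓ}` corresponding to the word `i₁ ⋯ i_ℓ`. -/
def wordProd (l : List ℕ) : Equiv.Perm ℤ := (l.map sB).prod

/-- The underlying function of the longest element `w₀ᴮ ∈ Bₙ`: `i ↦ -i` on `{-n, …, n}`,
fixing all other integers. -/
def w0BFun (n : ℕ) : ℤ → ℤ := fun i => if -(n : ℤ) ≤ i ∧ i ≤ (n : ℤ) then -i else i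

lemma w0BFun_involutive (n : ℕ) : Function.Involutive (w0BFun n) := by
  intro i
  unfold w0BFun
  split_ifs <;> omega

/-- The longest element `w₀ᴮ ∈ Bₙ`, as a permutation of `ℤ`. -/
def w0B (n : ℕ) : Equiv.Perm ℤ := (w0BFun_involutive n).toPerm

/-- `l` is a reduced decomposition of `w` in `Bₙ`: a word over the alphabet `{0, …, n-1}`
whose product of generators is `w`, of minimal length among all such words. -/
def IsReducedWord (n : ℕ) (w : Equiv.Perm ℤ) (l : List ℕ) : Prop :=
  (∀ i ∈ l, i < n) ∧ wordProd l = w ∧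
    ∀ l' : List ℕ, (∀ i ∈ l', i < n) → wordProd l' = w → l.length ≤ l'.length

/-- `R(w)`, the set of reduced decompositions of `w` in `Bₙ`. -/
def RSet (n : ℕ) (w : Equiv.Perm ℤ) : Set (List ℕ) := {l | IsReducedWord n w l}

/-- The length `ℓ(w)` of `w ∈ Bₙ`: the minimal length of a word over `{0, …, n-1}`
whose product of generators is `w`. -/
noncomputable def lenB (n : ℕ) (w : Equiv.Perm ℤ) : ℕ :=
  sInf {m : ℕ | ∃ l : List ℕ, (∀ i ∈ l, i < n) ∧ wordProd l = w ∧ l.length = m}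

/-- Whether a word begins with `k (k+1) k` or `(k+1) k (k+1)` for some `k ≥ 1`. -/
def isYB : List ℕ → Bool
  | a :: b :: c :: _ => (a != 0 && b == a + 1 && c == a) || (b != 0 && a == b + 1 && c == b + 1)
  | _ => false

/-- The number of Yang–Baxter moves in a word. -/
def ybCount (l : List ℕ) : ℕ :=
  ((Finset.range l.length).filter fun j => isYB (l.drop j) = true).card

/-- Whether a word begins with `0101` or `1010`. -/
def is01 : List ℕ → Bool
  | a :: b :: c :: d :: _ =>
      (a == 0 && b == 1 && c == 0 && d == 1) || (a == 1 && b == 0 && c == 1 && d == 0)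
  | _ => false

/-- The number of 01 moves in a word. -/
def m01Count (l : List ℕ) : ℕ :=
  ((Finset.range l.length).filter fun j => is01 (l.drop j) = true).card

/-- The underlying function of `w_k ∈ Bₙ`: `k ↦ -(k+2)`, `k+2 ↦ -k`, and `i ↦ -i` for all
other `i ∈ {1, …, n}`, extended by `w(-i) = -w(i)` and fixing all integers outside
`{-n, …, -1, 1, …, n}`. -/
def wkFun (n k : ℕ) : ℤ → ℤ := fun i =>
  if -(n : ℤ) ≤ i ∧ i ≤ (n : ℤ) then
    if i = (k : ℤ) then -((k : ℤ) + 2)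
    else if i = (k : ℤ) + 2 then -(k : ℤ)
    else if i = -(k : ℤ) then (k : ℤ) + 2
    else if i = -((k : ℤ) + 2) then (k : ℤ)
    else -i
  else i

/-- The underlying function of `w' ∈ Bₙ`: `1 ↦ 1`, `2 ↦ 2`, and `i ↦ -i` for `3 ≤ i ≤ n`,
extended by `w(-i) = -w(i)` and fixing all integers outside `{-n, …, -1, 1, …, n}`. -/
def wpFun (n : ℕ) : ℤ → ℤ := fun i =>
  if (-(n : ℤ) ≤ i ∧ i ≤ (n : ℤ)) ∧ (i < -2 ∨ 2 < i) then -i else i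

/-- `w`, viewed as a signed permutation of `{1, …, n}` via the values `w(1), …, w(n)`,
contains the signed pattern `p` (given by its list of values `p(1), …, p(m)`). -/
def ContainsPattern (n : ℕ) (w : ℤ → ℤ) (p : List ℤ) : Prop :=
  ∃ j : Fin p.length → ℤ, StrictMono j ∧ (∀ r, 1 ≤ j r ∧ j r ≤ (n : ℤ)) ∧
    (∀ r s, w (j r) < w (j s) ↔ p.get r < p.get s) ∧
    (∀ r, w (j r) < 0 ↔ p.get r < 0)

/-- The values of `sB`. -/
lemma sB_apply (i : ℕ) (x : ℤ) : sB i x =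
    if i = 0 then (if x = 1 then -1 else if x = -1 then 1 else x)
    else if x = i then i + 1 else if x = i + 1 then i
    else if x = -i then -(i + 1) else if x = -(i + 1) then -i else x := by
  unfold sB
  by_cases h : i = 0
  · simp only [h, if_true, Equiv.swap_apply_def]
  · simp only [h, if_false, Equiv.Perm.mul_apply, Equiv.swap_apply_def]
    split_ifs <;> omega

lemma sB_neg (i : ℕ) (x : ℤ) : sB i (-x) = -sB i x := by
  simp only [sB_apply]
  split_ifs <;> omega

lemma sB_sB (i : ℕ) (x : ℤ) : sB i (sB i x) = x := by
  have h := sB_apply i x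
  generalize sB i x = y at h
  rw [sB_apply]
  split_ifs at h <;> split_ifs <;> omega

lemma sB_mul_self (i : ℕ) : sB i * sB i = 1 := by
  ext x
  simp [sB_sB]

lemma sB_inv (i : ℕ) : (sB i)⁻¹ = sB i := inv_eq_of_mul_eq_one_left (sB_mul_self i)

lemma sB_ne_zero (i : ℕ) (x : ℤ) (hx : x ≠ 0) : sB i x ≠ 0 := by
  simp only [sB_apply]
  split_ifs <;> omega

/-- The reflection exchanging `x` with `y` and `-x` with `-y`. -/
def reflB (x y : ℤ) : Equiv.Perm ℤ :=
  if y = -x then Equiv.swap x y else Equiv.swap x y * Equiv.swap (-x) (-y)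

lemma reflB_conj (i : ℕ) (x y : ℤ) :
    sB i * reflB (sB i x) (sB i y) = reflB x y * sB i := by
  have hs : ∀ a b : ℤ, sB i * Equiv.swap (sB i a) (sB i b) = Equiv.swap a b * sB i := by
    intro a b
    rw [Equiv.mul_swap_eq_swap_mul, sB_sB, sB_sB]
  have hc : sB i y = -sB i x ↔ y = -x := by
    rw [← sB_neg]
    exact (sB i).injective.eq_iff
  unfold reflB
  simp only [hc]
  by_cases h : y = -x
  · simp only [h, if_true]
    exact hs _ _
  · simp only [h, if_false]
    rw [← mul_assoc, hs, mul_assoc, ← sB_neg, ← sB_neg, hs, mul_assoc]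

lemma reflB_eq_sB (i : ℕ) (x y : ℤ) (hx : x ≠ 0) (hy : y ≠ 0) (hxy : x < y)
    (h : sB i y < sB i x) : reflB x y = sB i := by
  by_cases h0 : i = 0
  · have hh : x = -1 ∧ y = 1 := by
      simp only [sB_apply] at h
      split_ifs at h <;> omega
    obtain ⟨rfl, rfl⟩ := hh
    simp [reflB, sB, h0, Equiv.swap_comm]
  · have hh : (x = i ∧ y = i + 1) ∨ (x = -(i + 1) ∧ y = -i) := by
      simp only [sB_apply] at h
      split_ifs at h <;> omega
    ext z
    rw [sB_apply]
    unfold reflB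
    rw [if_neg (by omega)]
    simp only [Equiv.Perm.mul_apply, Equiv.swap_apply_def]
    split_ifs <;> omega

lemma wordProd_cons (a : ℕ) (l : List ℕ) : wordProd (a :: l) = sB a * wordProd l := by
  simp [wordProd]

lemma wordProd_append (l m : List ℕ) : wordProd (l ++ m) = wordProd l * wordProd m := by
  simp [wordProd]

/-- The strong exchange property. -/
lemma exchangeB (n : ℕ) (l : List ℕ) : ∀ x y : ℤ, x ≠ 0 → y ≠ 0 → x < y →
    (wordProd l)⁻¹ y < (wordProd l)⁻¹ x → (∀ i ∈ l, i < n) →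
    ∃ m : List ℕ, (∀ i ∈ m, i < n) ∧ m.length + 1 = l.length ∧
      wordProd m = reflB x y * wordProd l := by
  induction l with
  | nil =>
    intro x y _ _ hxy h
    simp [wordProd] at h
    omega
  | cons a l ih =>
    intro x y hx hy hxy h hl
    rw [wordProd_cons, mul_inv_rev, sB_inv] at h
    simp only [Equiv.Perm.mul_apply] at h
    have hl' : ∀ i ∈ l, i < n := fun i hi => hl i (List.mem_cons_of_mem _ hi)
    rcases lt_trichotomy (sB a x) (sB a y) with h1 | h1 | h1
    · obtain ⟨m, hm, hlen, hp⟩ :=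
        ih _ _ (sB_ne_zero a x hx) (sB_ne_zero a y hy) h1 h hl'
      refine ⟨a :: m, ?_, by simp [hlen], ?_⟩
      · intro i hi
        rcases List.mem_cons.1 hi with rfl | hi
        · exact hl _ List.mem_cons_self
        · exact hm i hi
      · rw [wordProd_cons, hp, wordProd_cons, ← mul_assoc, reflB_conj, mul_assoc]
    · exact absurd ((sB a).injective h1) hxy.ne
    · refine ⟨l, hl', by simp, ?_⟩
      rw [reflB_eq_sB a x y hx hy hxy h1, wordProd_cons, ← mul_assoc, sB_mul_self, one_mul]

/-- The exchange property for a generator. -/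
lemma exchange_gen (n k : ℕ) (hk : 1 ≤ k) (l : List ℕ) (hl : ∀ i ∈ l, i < n)
    (h : (wordProd l)⁻¹ (k + 1) < (wordProd l)⁻¹ k) :
    ∃ m : List ℕ, (∀ i ∈ m, i < n) ∧ m.length + 1 = l.length ∧
      wordProd m = sB k * wordProd l := by
  have := exchangeB n l k (k + 1) (by omega) (by omega) (by omega) h hl
  rwa [reflB_eq_sB k k (k + 1) (by omega) (by omega) (by omega)
    (by simp only [sB_apply]; split_ifs <;> omega)] at this

lemma w0B_inv (n : ℕ) : (w0B n)⁻¹ = w0B n := by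
  apply inv_eq_of_mul_eq_one_left
  ext x
  simp [w0B, w0BFun_involutive n x]

lemma w0B_apply (n : ℕ) (x : ℤ) :
    w0B n x = if -(n : ℤ) ≤ x ∧ x ≤ (n : ℤ) then -x else x := rfl

/-- Any word for `w₀` can be shortened by three letters to a word for `s_k s_{k+1} s_k w₀`. -/
lemma shorten (n k : ℕ) (hk1 : 1 ≤ k) (hk2 : k + 2 ≤ n) (l : List ℕ)
    (hl : ∀ i ∈ l, i < n) (hw : wordProd l = w0B n) :
    ∃ m : List ℕ, (∀ i ∈ m, i < n) ∧ m.length + 3 = l.length ∧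
      wordProd m = sB k * (sB (k + 1) * (sB k * w0B n)) := by
  obtain ⟨m1, h1, e1, p1⟩ := exchange_gen n k hk1 l hl (by
    rw [hw, w0B_inv]
    simp only [w0B_apply]
    split_ifs <;> omega)
  rw [hw] at p1
  obtain ⟨m2, h2, e2, p2⟩ := exchange_gen n (k + 1) (by omega) m1 h1 (by
    rw [p1, mul_inv_rev, w0B_inv, sB_inv]
    have a1 : sB k ((k + 1 : ℕ) : ℤ) = k := by
      rw [sB_apply]; push_cast; split_ifs <;> omega
    have a2 : sB k (((k + 1 : ℕ) : ℤ) + 1) = k + 2 := by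
      rw [sB_apply]; push_cast; split_ifs <;> omega
    simp only [Equiv.Perm.mul_apply, a1, a2, w0B_apply]
    split_ifs <;> omega)
  rw [p1] at p2
  obtain ⟨m3, h3, e3, p3⟩ := exchange_gen n k hk1 m2 h2 (by
    rw [p2, mul_inv_rev, mul_inv_rev, w0B_inv, sB_inv, sB_inv]
    have a1 : sB (k + 1) (k : ℤ) = k := by
      rw [sB_apply]; push_cast; split_ifs <;> omega
    have a2 : sB (k + 1) ((k : ℤ) + 1) = k + 2 := by
      rw [sB_apply]; push_cast; split_ifs <;> omega
    have a3 : sB k (k : ℤ) = k + 1 := by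
      rw [sB_apply]; split_ifs <;> omega
    have a4 : sB k ((k : ℤ) + 2) = k + 2 := by
      rw [sB_apply]; split_ifs <;> omega
    simp only [Equiv.Perm.mul_apply, a1, a2, a3, a4, w0B_apply]
    split_ifs <;> omega)
  rw [p2] at p3
  exact ⟨m3, h3, by omega, p3⟩

lemma sB_eq_reflB (k : ℕ) (hk : 1 ≤ k) : reflB k (k + 1) = sB k :=
  reflB_eq_sB k k (k + 1) (by omega) (by omega) (by omega)
    (by simp only [sB_apply]; split_ifs <;> omega)

lemma braid_left (k : ℕ) (hk : 1 ≤ k) :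
    sB k * (sB (k + 1) * sB k) = reflB k (k + 2) := by
  have a1 : sB k (k : ℤ) = k + 1 := by rw [sB_apply]; split_ifs <;> omega
  have a2 : sB k ((k : ℤ) + 2) = k + 2 := by rw [sB_apply]; split_ifs <;> omega
  have h := reflB_conj k k (k + 2)
  have e := sB_eq_reflB (k + 1) (by omega)
  push_cast at e
  rw [show (k : ℤ) + 1 + 1 = k + 2 by ring] at e
  rw [a1, a2, e] at h
  rw [← mul_assoc, h, mul_assoc, sB_mul_self, mul_one]

lemma braidB (k : ℕ) (hk : 1 ≤ k) :
    sB (k + 1) * (sB k * sB (k + 1)) = sB k * (sB (k + 1) * sB k) := by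
  have a1 : sB (k + 1) (k : ℤ) = k := by rw [sB_apply]; push_cast; split_ifs <;> omega
  have a2 : sB (k + 1) ((k : ℤ) + 2) = k + 1 := by
    rw [sB_apply]; push_cast; split_ifs <;> omega
  have h := reflB_conj (k + 1) k (k + 2)
  rw [a1, a2, sB_eq_reflB k hk] at h
  rw [braid_left k hk, ← mul_assoc, h, mul_assoc, sB_mul_self, mul_one]

lemma wk_eq (n k : ℕ) (hk1 : 1 ≤ k) (hk2 : k + 2 ≤ n)
    (w : Equiv.Perm ℤ) (hw : ∀ i : ℤ, w i = wkFun n k i) :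
    w = sB k * (sB (k + 1) * (sB k * w0B n)) := by
  have e : sB k * (sB (k + 1) * (sB k * w0B n)) = reflB k (k + 2) * w0B n := by
    rw [← braid_left k hk1]
    simp only [mul_assoc]
  rw [e]
  ext x
  rw [hw]
  unfold reflB
  rw [if_neg (by omega)]
  simp only [Equiv.Perm.mul_apply, Equiv.swap_apply_def, wkFun, w0B_apply]
  by_cases hx : -(n : ℤ) ≤ x ∧ x ≤ n
  · simp only [hx, and_self, if_true]
    split_ifs <;> omega
  · simp only [hx, if_false]
    split_ifs <;> omega

/-- Prefixing a three-letter word realizing `w₀ w⁻¹` preserves reducedness both ways. -/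
lemma reduced_iff (n : ℕ) (w : Equiv.Perm ℤ) (p : List ℕ) (hp : ∀ i ∈ p, i < n)
    (hlen : p.length = 3) (hpw : wordProd p * w = w0B n)
    (hs : ∀ l : List ℕ, (∀ i ∈ l, i < n) → wordProd l = w0B n →
      ∃ m : List ℕ, (∀ i ∈ m, i < n) ∧ m.length + 3 = l.length ∧ wordProd m = w)
    (l : List ℕ) : IsReducedWord n (w0B n) (p ++ l) ↔ IsReducedWord n w l := by
  constructor
  · rintro ⟨h1, h2, h3⟩
    refine ⟨fun i hi => h1 i (List.mem_append_right _ hi), ?_, ?_⟩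
    · rw [wordProd_append, ← hpw] at h2
      exact mul_left_cancel h2
    · intro l' hl' hw'
      have := h3 (p ++ l') (by
        intro i hi
        rcases List.mem_append.1 hi with hi | hi
        · exact hp i hi
        · exact hl' i hi) (by rw [wordProd_append, hw', hpw])
      simpa using this
  · rintro ⟨h1, h2, h3⟩
    refine ⟨?_, by rw [wordProd_append, h2, hpw], ?_⟩
    · intro i hi
      rcases List.mem_append.1 hi with hi | hi
      · exact hp i hi
      · exact h1 i hi
    · intro l' hl' hw'
      obtain ⟨m, hm, e, hmw⟩ := hs l' hl' hw'
      have := h3 m hm hmw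
      simp only [List.length_append]
      omega

lemma bij_of_iff (n : ℕ) (w : Equiv.Perm ℤ) (p : List ℕ) (hlen : p.length = 3)
    (h : ∀ l, IsReducedWord n (w0B n) (p ++ l) ↔ IsReducedWord n w l) :
    Set.BijOn (fun l : List ℕ => l.drop 3)
      {l : List ℕ | IsReducedWord n (w0B n) l ∧ l.take 3 = p} (RSet n w) := by
  have key : ∀ l : List ℕ, l.take 3 = p → p ++ l.drop 3 = l := by
    intro l hl
    rw [← hl, List.take_append_drop]
  refine ⟨?_, ?_, ?_⟩
  · rintro l ⟨h1, h2⟩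
    exact (h _).1 (by rw [key l h2]; exact h1)
  · rintro l ⟨_, h2⟩ m ⟨_, h4⟩ e
    rw [← key l h2, ← key m h4]
    exact congrArg (p ++ ·) e
  · intro l hl
    refine ⟨p ++ l, ⟨(h l).2 hl, ?_⟩, ?_⟩
    · rw [← hlen, List.take_left]
    · change List.drop 3 (p ++ l) = l
      rw [← hlen, List.drop_left]

/-- Let `n ≥ 3` and `1 ≤ k ≤ n - 2`, and let `w = w_k ∈ Bₙ`.  Deleting the first three
letters is a bijection from the reduced decompositions of `w₀ᴮ` starting with
`(k, k+1, k)` onto `R(w_k)`, and likewise for those starting with `(k+1, k, k+1)`;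
consequently the number of reduced decompositions of `w₀ᴮ` starting with one of these
two factors is `2 · |R(w_k)|`. -/
theorem drop_three_bijection (n k : ℕ) (hn : 3 ≤ n) (hk1 : 1 ≤ k) (hk2 : k ≤ n - 2)
    (w : Equiv.Perm ℤ) (hw : ∀ i : ℤ, w i = wkFun n k i) :
    Set.BijOn (fun l => l.drop 3)
      {l : List ℕ | IsReducedWord n (w0B n) l ∧ l.take 3 = [k, k + 1, k]}
      (RSet n w) ∧
    Set.BijOn (fun l => l.drop 3)
      {l : List ℕ | IsReducedWord n (w0B n) l ∧ l.take 3 = [k + 1, k, k + 1]}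
      (RSet n w) ∧
    Nat.card {l : List ℕ // IsReducedWord n (w0B n) l ∧
        (l.take 3 = [k, k + 1, k] ∨ l.take 3 = [k + 1, k, k + 1])}
      = 2 * Nat.card ↥(RSet n w) := by
  have hk2' : k + 2 ≤ n := by omega
  have hwk := wk_eq n k hk1 hk2' w hw
  have hs : ∀ l : List ℕ, (∀ i ∈ l, i < n) → wordProd l = w0B n →
      ∃ m : List ℕ, (∀ i ∈ m, i < n) ∧ m.length + 3 = l.length ∧ wordProd m = w := by
    intro l hl h
    rw [hwk]
    exact shorten n k hk1 hk2' l hl h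
  have hp1 : wordProd [k, k + 1, k] * w = w0B n := by
    rw [hwk]
    ext x
    simp [wordProd, sB_sB]
  have hp2 : wordProd [k + 1, k, k + 1] * w = w0B n := by
    rw [← hp1]
    simp only [wordProd, List.map_cons, List.map_nil, List.prod_cons, List.prod_nil, mul_one]
    rw [braidB k hk1]
  have i1 := reduced_iff n w [k, k + 1, k] (by simp; omega) rfl hp1 hs
  have i2 := reduced_iff n w [k + 1, k, k + 1] (by simp; omega) rfl hp2 hs
  have b1 := bij_of_iff n w _ rfl i1
  have b2 := bij_of_iff n w _ rfl i2
  refine ⟨b1, b2, ?_⟩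
  have hb : Nat.card (Bool × ↥(RSet n w)) = 2 * Nat.card ↥(RSet n w) := by
    rw [Nat.card_prod]
    simp
  rw [← hb]
  symm
  refine Nat.card_congr (Equiv.ofBijective (fun q : Bool × ↥(RSet n w) =>
    ⟨(if q.1 = true then [k, k + 1, k] else [k + 1, k, k + 1]) ++ q.2.1, ?_⟩) ⟨?_, ?_⟩)
  · obtain ⟨b, l, hl⟩ := q
    cases b
    · exact ⟨(i2 l).2 hl, Or.inr rfl⟩
    · exact ⟨(i1 l).2 hl, Or.inl rfl⟩
  · rintro ⟨b, l, hl⟩ ⟨c, m, hm⟩ e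
    cases b <;> cases c <;> simp at e ⊢ <;> exact e
  · rintro ⟨l, hl, h | h⟩
    · refine ⟨(true, ⟨l.drop 3, b1.mapsTo ⟨hl, h⟩⟩), Subtype.ext ?_⟩
      simp only [if_true]
      rw [← h, List.take_append_drop]
    · refine ⟨(false, ⟨l.drop 3, b2.mapsTo ⟨hl, h⟩⟩), Subtype.ext ?_⟩
      simp only [Bool.false_eq_true, if_false]
      rw [← h, List.take_append_drop]
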